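/- Let X be a finite set of n points in ℝ² with the L∞ metric, n ≥ 2. If no line induced by a pair of distinct points of X is universal, then the number of distinct lines induced by pairs of distinct points of X is at least ⌈n/2⌉. -/

import Mathlib

noncomputable section
open Classical

/-- The L∞ metric on ℝ². -/
def rhoInf (u v : ℝ × ℝ) : ℝ := max |u.1 - v.1| |u.2 - v.2|

/-- `z` is between `u` and `v` (w.r.t. the L∞ metric): the three points are
pairwise distinct and `ρ∞(u,v) = ρ∞(u,z) + ρ∞(z,v)`. -/
def MBtw (u z v : ℝ × ℝ) : Prop :=
  u ≠ z ∧ z ≠ v ∧ u ≠ v ∧ rhoInf u v = rhoInf u z + rhoInf z v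

/-- The line of `X` induced by distinct points `u, v`: all `z ∈ X` such that
`z ∈ {u,v}` or one of `u, v, z` is between the other two. -/
def lineThrough (X : Finset (ℝ × ℝ)) (u v : ℝ × ℝ) : Finset (ℝ × ℝ) :=
  X.filter fun z => z = u ∨ z = v ∨ MBtw u z v ∨ MBtw z u v ∨ MBtw u v z

/-- The number of distinct lines induced by pairs of distinct points of `X`. -/
def numLines (X : Finset (ℝ × ℝ)) : ℕ :=
  (((X ×ˢ X).filter fun p => p.1 ≠ p.2).image fun p => lineThrough X p.1 p.2).card

/-!
Rotate the plane by `45°`, using the coordinates `p.1 + p.2` and `p.1 - p.2`. Twice the metric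
becomes the `ℓ¹` metric, so `z` is between `u` and `v` exactly when it lies in the box spanned by
them, and nothing more is needed of the points than their two coordinates in linear orders.

Call a vertical segment two consecutive points of a column. It is first if no column further left
has a segment at the same two heights, and repeated otherwise, in which case it forms a rectangle
with the first segment at these heights. Every point except the top one of each column starts a
segment, so `n ≤ #first + #repeated + #columns`.

* The lines of the first segments are distinct and all contain a lowest point, while some line
  avoids that point. So `#first + 1 ≤ #lines`.
* Between any two neighbouring columns choose an edge, a pair of points whose box contains no other
  point. The `#columns - 1` edges and the repeated segments are charged injectively to lines. An
  edge takes its own line; if a later edge has the same line, it takes instead a detour through the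
  leftmost point off that line. A repeated segment takes a diagonal of its rectangle, or the line of
  the bottom side. So `#columns - 1 + #repeated ≤ #lines`.

Adding up, `n ≤ 2 * #lines`.
-/

namespace LinfLines

open Set OrderDual

variable {P α β : Type*} [LinearOrder α] [LinearOrder β]

section Lines

variable (x : P → α) (y : P → β)

/-- `a` is weakly south-west of `b` in the coordinates `x`, `y`. Weakly north-west is
`SW x (toDual ∘ y)`: replacing `y` by `toDual ∘ y` reflects the configuration and leaves boxes
and lines unchanged, which is how every statement also covers its mirror image. -/
@[grind =] def SW (a b : P) : Prop := x a ≤ x b ∧ y a ≤ y b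

/-- `a` is strictly south-west of `b`, that is, smaller in both coordinates. -/
@[grind =] def StrictSW (a b : P) : Prop := x a < x b ∧ y a < y b

/-- The points of the axis-parallel box with opposite corners `a` and `b`, playing the role of
`ℓ¹` betweenness (with the end points included). -/
def box (a b : P) : Set P := {z | x z ∈ uIcc (x a) (x b) ∧ y z ∈ uIcc (y a) (y b)}

/-- The line induced by `u` and `v` for the betweenness given by `box`. -/
def line (u v : P) : Set P := {z | z ∈ box x y u v ∨ u ∈ box x y z v ∨ v ∈ box x y u z}

end Lines

variable {x : P → α} {y : P → β} {a b g p q p' q' p₁ q₁ p₁' q₁' s t s' t' t₁ u v w z u' v' w' z₁ u₁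
  v₁ w₁ : P} {ℓ : Set P}

@[grind =] theorem mem_box : z ∈ box x y a b ↔
    (x a ≤ x z ∧ x z ≤ x b ∨ x b ≤ x z ∧ x z ≤ x a) ∧
      (y a ≤ y z ∧ y z ≤ y b ∨ y b ≤ y z ∧ y z ≤ y a) := by
  simp only [box, mem_ofPred_eq, mem_uIcc]

theorem mem_line : z ∈ line x y u v ↔ z ∈ box x y u v ∨ u ∈ box x y z v ∨ v ∈ box x y u z :=
  Iff.rfl

theorem line_comm (u v : P) : line x y u v = line x y v u := by
  ext z
  grind [mem_line]

theorem left_mem_line (u v : P) : u ∈ line x y u v := by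
  grind [mem_line]

theorem right_mem_line (u v : P) : v ∈ line x y u v := by
  grind [mem_line]

theorem mem_line_rotate : z ∈ line x y u v ↔ v ∈ line x y u z := by
  grind [mem_line]

@[grind =] theorem sw_toDual : SW x (toDual ∘ y) a b ↔ x a ≤ x b ∧ y b ≤ y a := Iff.rfl

@[grind =] theorem strictSW_toDual : StrictSW x (toDual ∘ y) a b ↔ x a < x b ∧ y b < y a := Iff.rfl

@[simp] theorem strictSW_toDual_toDual :
    StrictSW x (toDual ∘ toDual ∘ y) a b ↔ StrictSW x y a b := Iff.rfl

@[simp, grind =] theorem box_toDual (a b : P) : box x (toDual ∘ y) a b = box x y a b := by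
  ext z
  simp only [mem_box, Function.comp_apply, toDual_le_toDual]
  tauto

@[simp, grind =] theorem line_toDual (u v : P) : line x (toDual ∘ y) u v = line x y u v := by
  simp only [line, box_toDual]

theorem StrictSW.mem_line_iff (h : StrictSW x y s t) :
    z ∈ line x y s t ↔ SW x y z s ∨ (SW x y s z ∧ SW x y z t) ∨ SW x y t z := by
  grind [mem_line]

theorem mem_line_iff_of_vertical (hx : x s = x t) (hy : y s < y t) :
    z ∈ line x y s t ↔ y z ≤ y s ∨ y t ≤ y z ∨ x z = x s := by
  grind [mem_line]

theorem mem_line_iff_of_horizontal (hx : x s < x t) (hy : y s = y t) :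
    z ∈ line x y s t ↔ x z ≤ x s ∨ x t ≤ x z ∨ y z = y s := by
  grind [mem_line]

theorem StrictSW.opposite_mem_line (h : StrictSW x y s t) (hab : StrictSW x (toDual ∘ y) a b)
    (ha : a ∈ line x y s t) (hb : b ∈ line x y s t) :
    (SW x y a s ∧ SW x y b s) ∨ (a ∈ box x y s t ∧ b ∈ box x y s t) ∨
      (SW x y t a ∧ SW x y t b) := by
  rw [h.mem_line_iff] at ha hb
  grind

theorem corners_eq_of_line_eq (h : StrictSW x y s t) (h' : StrictSW x (toDual ∘ y) s' t')
    (hl : line x y s t = line x y s' t') :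
    x s = x s' ∧ x t = x t' ∧ y s = y t' ∧ y t = y s' := by
  have hst := h.opposite_mem_line h' (hl ▸ left_mem_line ..) (hl ▸ right_mem_line ..)
  have hst' := h'.opposite_mem_line (strictSW_toDual_toDual.2 h)
    (by simp [← hl, left_mem_line]) (by simp [← hl, right_mem_line])
  grind

theorem StrictSW.not_sw_of_notMem (h : StrictSW x y s t) (h' : StrictSW x y s' t')
    (hl : line x y s t = line x y s' t') (hts : SW x y t s') (hz : z ∉ line x y s t) :
    ¬ SW x y z t ∧ ¬ SW x y s' z := by
  have hz' := hl ▸ hz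
  rw [h.mem_line_iff] at hz
  rw [h'.mem_line_iff] at hz'
  grind

/-! ### Edges between neighbouring columns -/

/-- The columns of `a` and `b` are neighbours, that of `a` being the left one; a column consists of
the points with a given value of `x`. -/
def ColumnAdj (x : P → α) (a b : P) : Prop := x a < x b ∧ ∀ w, x w ≤ x a ∨ x b ≤ x w

theorem exists_columnAdj [Finite P] (h : x a < x b) : ∃ c, ColumnAdj x a c := by
  obtain ⟨c, hc, hmin⟩ := exists_min_image {w | x a < x w} x (toFinite _) ⟨b, h⟩
  exact ⟨c, hc, fun w => (le_or_gt (x w) (x a)).imp_right (hmin w)⟩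

theorem ColumnAdj.y_ne (huniv : ∀ u v, u ≠ v → line x y u v ≠ univ) (h : ColumnAdj x a b) :
    y a ≠ y b := by
  intro hy
  have hab : a ≠ b := fun e => h.1.ne (congrArg x e)
  refine huniv a b hab (eq_univ_of_forall fun w => ?_)
  rw [mem_line_iff_of_horizontal h.1 hy]
  exact (h.2 w).imp_right Or.inl

/-- `p` and `q` lie in neighbouring columns, at different heights, and their box contains no further
point. -/
structure IsEdge (x : P → α) (y : P → β) (p q : P) : Prop where
  adj : ColumnAdj x p q
  y_ne : y p ≠ y q
  eq_of_mem_box : ∀ w ∈ box x y p q, w = p ∨ w = q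

theorem exists_isEdge [Finite P] (inj : Function.Injective fun p => (x p, y p))
    (huniv : ∀ u v, u ≠ v → line x y u v ≠ univ) (h : x a < x b) :
    ∃ p q, IsEdge x y p q ∧ x p = x a := by
  obtain ⟨c, hac, hc⟩ := exists_columnAdj h
  obtain ⟨⟨p, q⟩, ⟨hp, hq⟩, hmin⟩ :=
    (toFinite {e : P × P | x e.1 = x a ∧ x e.2 = x c}).exists_minimalFor
      (fun e => box x y e.1 e.2) _ ⟨(a, c), rfl, rfl⟩
  simp only [mem_ofPred_eq, Prod.forall, and_imp] at hp hq hmin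
  have adj : ColumnAdj x p q := by simpa only [ColumnAdj, hp, hq] using And.intro hac hc
  refine ⟨p, q, ⟨adj, adj.y_ne huniv, fun w hw => ?_⟩, hp⟩
  rcases adj.2 w with hwx | hwx
  · left
    have hsub := hmin w q (by grind) hq (by intro z; grind)
    have : p ∈ box x y w q := hsub (by grind)
    exact inj (Prod.ext (by grind) (by grind))
  · right
    have hsub := hmin p w hp (by grind) (by intro z; grind)
    have : q ∈ box x y p w := hsub (by grind)
    exact inj (Prod.ext (by grind) (by grind))

namespace IsEdge

theorem dual (h : IsEdge x y p q) : IsEdge x (toDual ∘ y) p q :=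
  ⟨h.adj, by simpa using h.y_ne, by simpa using h.eq_of_mem_box⟩

theorem strictSW_or (h : IsEdge x y p q) : StrictSW x y p q ∨ StrictSW x (toDual ∘ y) p q :=
  h.y_ne.lt_or_gt.imp (⟨h.adj.1, ·⟩) (⟨h.adj.1, ·⟩)

theorem mem_line_iff (h : IsEdge x y p q) (hpq : StrictSW x y p q) :
    w ∈ line x y p q ↔ SW x y w p ∨ SW x y q w := by
  rw [hpq.mem_line_iff]
  have := h.eq_of_mem_box w
  grind

theorem strictSW_of_line_eq (h : IsEdge x y p q) (h' : IsEdge x y p' q')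
    (hpq : StrictSW x y p q) (hl : line x y p q = line x y p' q') : StrictSW x y p' q' := by
  refine h'.strictSW_or.resolve_right fun hd => ?_
  -- The two edges would be the two diagonals of one rectangle, whose box is not empty.
  have := corners_eq_of_line_eq hpq hd hl
  have := h.eq_of_mem_box p'
  grind

theorem sw_of_line_eq (h : IsEdge x y p q) (hpq : StrictSW x y p q)
    (hl : line x y p q = line x y p' q') (hlt : x p < x p') : SW x y q p' := by
  have := (h.mem_line_iff hpq).1 (hl ▸ left_mem_line p' q')
  grind

end IsEdge

/-! ### Detours -/

/-- The increasing edge `pq` and the later edge `p'q'` have the same line, and `z` is a leftmost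
point off that line. Then the line of `z` and `q` can be charged to `pq` in place of its own. -/
structure IsDetour (x : P → α) (y : P → β) (p q p' q' z : P) : Prop where
  left : IsEdge x y p q
  right : IsEdge x y p' q'
  increasing : StrictSW x y p q
  line_eq : line x y p q = line x y p' q'
  lt : x p < x p'
  notMem : z ∉ line x y p q
  leftmost : ∀ w ∉ line x y p q, x z ≤ x w

theorem IsEdge.exists_isDetour [Finite P] (huniv : ∀ u v, u ≠ v → line x y u v ≠ univ)
    (h : IsEdge x y p q) (h' : IsEdge x y p' q') (hpq : StrictSW x y p q)
    (hl : line x y p q = line x y p' q') (hlt : x p < x p') : ∃ z, IsDetour x y p q p' q' z := by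
  obtain ⟨z, hz, hmin⟩ := exists_min_image {w | w ∉ line x y p q} x (toFinite _)
    ((ne_univ_iff_exists_notMem _).1 (huniv p q fun e => h.y_ne (congrArg y e)))
  exact ⟨z, h, h', hpq, hl, hlt, hz, hmin⟩

namespace IsDetour

theorem increasing_right (h : IsDetour x y p q p' q' z) : StrictSW x y p' q' :=
  h.left.strictSW_of_line_eq h.right h.increasing h.line_eq

theorem sw (h : IsDetour x y p q p' q' z) : SW x y q p' :=
  h.left.sw_of_line_eq h.increasing h.line_eq h.lt

theorem mem_regions (h : IsDetour x y p q p' q' z) (w : P) :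
    (SW x y w p ∨ (SW x y q w ∧ SW x y w p') ∨ SW x y q' w) ∨
      (w ∉ line x y p q ∧ (x w ≤ x p ∧ y p' < y w ∨ x q' ≤ x w ∧ y w < y q)) := by
  have hw := h.left.mem_line_iff h.increasing (w := w)
  have hw' := h.right.mem_line_iff h.increasing_right (w := w)
  rw [← h.line_eq] at hw'
  have := h.left.adj.2 w
  have := h.right.adj.2 w
  by_cases hc : w ∈ line x y p q <;> grind [h.increasing, h.increasing_right, h.sw]

theorem northwest_or_southeast (h : IsDetour x y p q p' q' z) :
    x z < x q ∧ y p' < y z ∨ x p' < x z ∧ y z < y q := by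
  have := h.mem_regions z
  have := h.left.mem_line_iff h.increasing (w := z)
  grind [h.notMem, h.increasing, h.increasing_right, h.sw]

theorem strictSW_or (h : IsDetour x y p q p' q' z) :
    StrictSW x (toDual ∘ y) z q ∨ StrictSW x (toDual ∘ y) q z := by
  grind [h.northwest_or_southeast, h.sw]

theorem mem_line_iff (h : IsDetour x y p q p' q' z) (w : P) : w ∈ line x y z q ↔
    if x z < x q then
      SW x (toDual ∘ y) w z ∨ (SW x (toDual ∘ y) z w ∧ SW x (toDual ∘ y) w q) ∨
        SW x (toDual ∘ y) q w
    else
      SW x (toDual ∘ y) w q ∨ (SW x (toDual ∘ y) q w ∧ SW x (toDual ∘ y) w z) ∨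
        SW x (toDual ∘ y) z w := by
  rcases h.strictSW_or with hz | hz
  · rw [← line_toDual, hz.mem_line_iff, if_pos hz.1]
  · rw [line_comm, ← line_toDual, hz.mem_line_iff, if_neg hz.1.not_gt]

theorem notMem_line (h : IsDetour x y p q p' q' z) (hw : StrictSW x y w q ∨ StrictSW x y q w) :
    w ∉ line x y z q := by
  have := h.mem_line_iff w
  grind [h.northwest_or_southeast, h.sw]

theorem left_notMem_line (h : IsDetour x y p q p' q' z) : p ∉ line x y z q :=
  h.notMem_line (.inl h.increasing)

theorem right_notMem_line (h : IsDetour x y p q p' q' z) : q' ∉ line x y z q :=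
  h.notMem_line (.inr (by grind [h.increasing_right, h.sw]))

theorem line_ne_of_strictSW (h : IsDetour x y p q p' q' z) (hst : StrictSW x y s t) :
    line x y z q ≠ line x y s t := by
  intro hl
  -- The rectangle with diagonal `st` would have a corner in the column of `q` at the height of `z`.
  have corner (c : P) (hx : x c = x q) : y c ≠ y z := by
    have := h.mem_regions c
    grind [h.northwest_or_southeast, h.sw, h.increasing, h.increasing_right]
  rcases h.strictSW_or with hz | hz
  · have := corners_eq_of_line_eq hst hz hl.symm
    grind
  · have := corners_eq_of_line_eq hst hz (hl.symm.trans (line_comm z q))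
    grind

theorem line_ne_edge_line (h : IsDetour x y p q p' q' z) (h₁ : IsEdge x y p₁ q₁)
    (hp : x p₁ = x p → StrictSW x y p₁ q₁) (hp' : x p₁ = x p' → StrictSW x y p₁ q₁) :
    line x y z q ≠ line x y p₁ q₁ := by
  intro hl
  rcases h₁.strictSW_or with hi | hd
  · exact h.line_ne_of_strictSW hi hl
  have mem_iff (w : P) : w ∈ line x y z q ↔
      SW x (toDual ∘ y) w p₁ ∨ SW x (toDual ∘ y) q₁ w := by
    rw [hl, ← h₁.dual.mem_line_iff hd, line_toDual]
  have hnp := (mem_iff p).not.1 h.left_notMem_line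
  have hnq' := (mem_iff q').not.1 h.right_notMem_line
  rcases (mem_iff q).1 (right_mem_line z q) with hq | hq
  · have hlt : x p₁ < x q' := by grind [h.increasing_right, h.sw]
    have hge : x q' ≤ x q₁ := by grind [h.mem_regions q₁, h.increasing, h.increasing_right, h.sw]
    have hcol : x p₁ = x p' := by grind [h.right.adj.2 p₁, h₁.adj.2 p', h.right.adj.1]
    grind [hp' hcol]
  · have hgt : x p < x q₁ := by grind [h.increasing]
    have hle : x p₁ ≤ x p := by grind [h.left.adj.2 p₁]
    have hcol : x p₁ = x p := hle.antisymm ((h₁.adj.2 p).resolve_right hgt.not_ge)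
    grind [hp hcol]

theorem line_ne_of_lt (h : IsDetour x y p q p' q' z) (h₁ : IsDetour x y p₁ q₁ p₁' q₁' z₁)
    (hlt : x q < x q₁) : line x y z q ≠ line x y z₁ q₁ := by
  intro hl
  have hp₁ : p₁ ∉ line x y z q := hl ▸ h₁.left_notMem_line
  have hq₁ : q₁ ∈ line x y z q := hl ▸ right_mem_line ..
  rw [h.mem_line_iff] at hp₁ hq₁
  have hcol : x q ≤ x p₁ := (h₁.left.adj.2 q).resolve_right hlt.not_ge
  have hle : y q₁ ≤ y q := by grind [h.northwest_or_southeast, h.sw]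
  have hoff : p₁ ∉ line x y p q := by
    have := h.left.mem_line_iff h.increasing (w := p₁)
    grind [h.increasing, h₁.increasing]
  have hz : x z ≤ x p₁ := h.leftmost p₁ hoff
  grind [h.northwest_or_southeast, h.sw, h₁.increasing]

theorem column_eq_of_line_eq (h : IsDetour x y p q p' q' z) (h₁ : IsDetour x y p₁ q₁ p₁' q₁' z₁)
    (hl : line x y z q = line x y z₁ q₁) : x q = x q₁ := by
  rcases lt_trichotomy (x q) (x q₁) with hlt | heq | hlt
  · exact absurd hl (h.line_ne_of_lt h₁ hlt)
  · exact heq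
  · exact absurd hl.symm (h₁.line_ne_of_lt h hlt)

theorem line_ne_of_isDetour_toDual (h : IsDetour x y p q p' q' z)
    (h₁ : IsDetour x (toDual ∘ y) p₁ q₁ p₁' q₁' z₁) : line x y z q ≠ line x y z₁ q₁ := by
  rcases h₁.strictSW_or with hz | hz
  · exact h.line_ne_of_strictSW (strictSW_toDual_toDual.1 hz)
  · rw [line_comm z₁]
    exact h.line_ne_of_strictSW (strictSW_toDual_toDual.1 hz)

end IsDetour

/-! ### Rectangles -/

/-- `u` is the next point above `v` in its column, so `v` and `u` bound a vertical segment. -/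
def ColCovBy (x : P → α) (y : P → β) (v u : P) : Prop :=
  x u = x v ∧ y v < y u ∧ ∀ k, x k = x v → y k ≤ y v ∨ y u ≤ y k

omit [LinearOrder α] in
theorem ColCovBy.dual (h : ColCovBy x y v u) : ColCovBy x (toDual ∘ y) u v :=
  ⟨h.1.symm, h.2.1, fun k hk => (h.2.2 k (hk.trans h.1)).symm⟩

omit [LinearOrder α] in
theorem exists_colCovBy [Finite P] (hx : x u = x v) (hy : y v < y u) :
    ∃ u, ColCovBy x y v u := by
  obtain ⟨c, hc, hmin⟩ := exists_min_image {c | x c = x v ∧ y v < y c} y (toFinite _) ⟨u, hx, hy⟩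
  exact ⟨c, hc.1, hc.2, fun k hk => (le_or_gt (y k) (y v)).imp_right fun h => hmin k ⟨hk, h⟩⟩

theorem ColCovBy.y_eq_of_line_eq (huniv : ∀ u v, u ≠ v → line x y u v ≠ univ)
    (h : ColCovBy x y w t) (h' : ColCovBy x y w' t') (hl : line x y w t = line x y w' t') :
    y w = y w' ∧ y t = y t' := by
  have key {w t w' t' : P} (h : ColCovBy x y w t) (h' : ColCovBy x y w' t')
      (hl : line x y w t = line x y w' t') : y w' ≤ y w ∧ y t ≤ y t' := by
    have mem (c : P) := mem_line_iff_of_vertical (z := c) h.1.symm h.2.1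
    -- A point `z` off the line lies at a height strictly inside both segments.
    obtain ⟨z, hz⟩ := (ne_univ_iff_exists_notMem _).1 (huniv w t fun e => h.2.1.ne (congrArg y e))
    have hz' := (mem_line_iff_of_vertical h'.1.symm h'.2.1).not.1 (hl ▸ hz)
    rw [mem] at hz
    have hw' := (mem w').1 (hl ▸ left_mem_line w' t')
    have ht' := (mem t').1 (hl ▸ right_mem_line w' t')
    grind [h.2.2 w', h.2.2 t']
  have hle := key h h' hl
  have hge := key h' h hl.symm
  exact ⟨hge.1.antisymm hle.1, hle.2.antisymm hge.2⟩

/-- `v u w t` are the corners of a rectangle whose left side `vu` and right side `wt` are vertical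
segments, with `v` and `w` at the bottom. -/
structure IsRect (x : P → α) (y : P → β) (v u w t : P) : Prop where
  left : ColCovBy x y v u
  right : ColCovBy x y w t
  lt : x v < x w
  bot : y v = y w
  top : y u = y t

/-- No segment at the same two heights as `vu` lies in a column further left. -/
def IsLeftmostSide (x : P → α) (y : P → β) (v u : P) : Prop :=
  ∀ v' u', ColCovBy x y v' u' → y v' = y v → y u' = y u → x v ≤ x v'

/-- `ℓ` is not the line of an edge, and not the line of a diagonal of a rectangle whose right side
differs from `wt`, so that it can be charged to `wt`. Sides are compared by their coordinates. -/
structure IsFresh (x : P → α) (y : P → β) (w t : P) (ℓ : Set P) : Prop where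
  ne_edge : ∀ p q, IsEdge x y p q → ℓ ≠ line x y p q
  ne_diagonal : ∀ v' u' w' t', IsRect x y v' u' w' t' →
    ¬ (x w' = x w ∧ y w' = y w ∧ y t' = y t) → ℓ ≠ line x y v' t' ∧ ℓ ≠ line x y u' w'

theorem exists_isLeftmostSide [Finite P] (h : ColCovBy x y w t) :
    ∃ v u, ColCovBy x y v u ∧ y v = y w ∧ y u = y t ∧ IsLeftmostSide x y v u ∧ x v ≤ x w := by
  obtain ⟨⟨v, u⟩, ⟨hvu, hv, hu⟩, hmin⟩ :=
    exists_min_image {e : P × P | ColCovBy x y e.1 e.2 ∧ y e.1 = y w ∧ y e.2 = y t}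
      (fun e => x e.1) (toFinite _) ⟨(w, t), h, rfl, rfl⟩
  exact ⟨v, u, hvu, hv, hu, fun v' u' h' hv' hu' => hmin (v', u') ⟨h', hv'.trans hv, hu'.trans hu⟩,
    hmin (w, t) ⟨h, rfl, rfl⟩⟩

namespace IsRect

theorem dual (R : IsRect x y v u w t) : IsRect x (toDual ∘ y) u v t w :=
  ⟨R.left.dual, R.right.dual, by grind [R.left.1, R.right.1, R.lt], congrArg toDual R.top,
    congrArg toDual R.bot⟩

theorem coords (R : IsRect x y v u w t) :
    x u = x v ∧ x t = x w ∧ x v < x w ∧ y w = y v ∧ y t = y u ∧ y v < y u := by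
  grind [R.left.1, R.left.2.1, R.right.1, R.lt, R.bot, R.top]

theorem strictSW (R : IsRect x y v u w t) : StrictSW x y v t := by
  grind [R.coords]

theorem strictSW_toDual (R : IsRect x y v u w t) : StrictSW x (toDual ∘ y) u w := by
  grind [R.coords]

theorem corners_mem_diagonal (R : IsRect x y v u w t) :
    u ∈ line x y v t ∧ w ∈ line x y v t := by
  simp only [R.strictSW.mem_line_iff]
  grind [R.coords]

theorem sw_of_edge_line_eq (R : IsRect x y v u w t) (he : IsEdge x y p q)
    (hl : line x y v t = line x y p q) :
    StrictSW x y p q ∧ (SW x y t p ∨ SW x y q v) := by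
  have hpq : StrictSW x y p q := by
    refine he.strictSW_or.resolve_right fun hd => ?_
    have := corners_eq_of_line_eq R.strictSW hd hl
    have := he.eq_of_mem_box v
    grind
  have hu := (he.mem_line_iff hpq).1 (hl ▸ R.corners_mem_diagonal.1)
  have hw := (he.mem_line_iff hpq).1 (hl ▸ R.corners_mem_diagonal.2)
  grind [R.coords]

theorem sw_of_line_eq (R : IsRect x y v u w t) (R' : IsRect x y v' u' w' t')
    (hl : line x y v t = line x y v' t') :
    (x w' = x w ∧ y w' = y w ∧ y t' = y t) ∨ SW x y t v' ∨ SW x y t' v := by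
  -- Each rectangle contains the other, unless one of them lies south-west of the other.
  have hR := R'.strictSW.opposite_mem_line R.strictSW_toDual (hl ▸ R.corners_mem_diagonal.1)
    (hl ▸ R.corners_mem_diagonal.2)
  have hR' := R.strictSW.opposite_mem_line R'.strictSW_toDual (hl ▸ R'.corners_mem_diagonal.1)
    (hl ▸ R'.corners_mem_diagonal.2)
  grind [R.coords, R'.coords]

theorem side_eq_of_line_eq (R : IsRect x y v u w t) (R' : IsRect x y v' u' w' t')
    (hl : line x y v t = line x y u' w') : x w' = x w ∧ y w' = y w ∧ y t' = y t := by
  have := corners_eq_of_line_eq R.strictSW R'.strictSW_toDual hl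
  grind [R.coords, R'.coords]

end IsRect

theorem IsFresh.of_toDual (h : IsFresh x (toDual ∘ y) t w ℓ) (hx : x t = x w) :
    IsFresh x y w t ℓ := by
  refine ⟨fun p q he => by simpa using h.ne_edge p q he.dual, fun v' u' w' t' R hne => ?_⟩
  have := h.ne_diagonal u' v' t' w' R.dual fun ⟨hx', ht, hw⟩ =>
    hne ⟨R.right.1.symm.trans (hx'.trans hx), hw, ht⟩
  simpa [and_comm] using this

/-! ### Diagonals charged to repeated segments -/

namespace IsRect

theorem isFresh_diagonal (R : IsRect x y v u w t) (ha : a ∉ line x y v t) (hat : SW x y a t)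
    (hedge : ∀ p q, IsEdge x y p q → StrictSW x y p q → line x y v t = line x y p q →
      ¬ SW x y q v)
    (hrect : ∀ v' u' w' t', IsRect x y v' u' w' t' → line x y v t = line x y v' t' →
      ¬ SW x y t' v) :
    IsFresh x y w t (line x y v t) := by
  refine ⟨fun p q he hl => ?_, fun v' u' w' t' R' hne =>
    ⟨fun hl => ?_, fun hl => hne (R.side_eq_of_line_eq R' hl)⟩⟩
  · obtain ⟨hpq, hs | hs⟩ := R.sw_of_edge_line_eq he hl
    · exact (R.strictSW.not_sw_of_notMem hpq hl hs ha).1 hat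
    · exact hedge p q he hpq hl hs
  · rcases R.sw_of_line_eq R' hl with hs | hs | hs
    · exact hne hs
    · exact (R.strictSW.not_sw_of_notMem R'.strictSW hl hs ha).1 hat
    · exact hrect v' u' w' t' R' hl hs

theorem isFresh_of_notMem (R : IsRect x y v u w t) (ha : a ∉ line x y v t) (hat : SW x y a t)
    (hb : b ∉ line x y v t) (hvb : SW x y v b) : IsFresh x y w t (line x y v t) := by
  refine R.isFresh_diagonal ha hat (fun p q _ hpq hl hs => ?_) fun v' u' w' t' R' hl hs => ?_
  · exact (hpq.not_sw_of_notMem R.strictSW hl.symm hs (hl ▸ hb)).2 hvb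
  · exact (R'.strictSW.not_sw_of_notMem R.strictSW hl.symm hs (hl ▸ hb)).2 hvb

theorem exists_above_or_below [Finite P] (huniv : ∀ u v, u ≠ v → line x y u v ≠ univ)
    (R : IsRect x y v u w t) (hempty : ∀ g, ¬ (StrictSW x y v g ∧ StrictSW x y g t)) :
    ∃ a, (x v < x a ∧ x a < x w) ∧ (y a < y v ∨ y u < y a) := by
  obtain ⟨a, hva⟩ := exists_columnAdj R.lt
  have hua : ColumnAdj x u a := by simpa only [ColumnAdj, R.left.1] using hva
  have haw : x a < x w := by
    obtain ⟨k, hk⟩ :=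
      (ne_univ_iff_exists_notMem _).1 (huniv v w fun e => R.lt.ne (congrArg x e))
    rw [mem_line_iff_of_horizontal R.lt R.bot] at hk
    grind [hva.2 k]
  refine ⟨a, ⟨hva.1, haw⟩, ?_⟩
  grind [hva.y_ne huniv, hua.y_ne huniv, hempty a, hva.1, R.coords]

theorem exists_left_or_right (huniv : ∀ u v, u ≠ v → line x y u v ≠ univ)
    (R : IsRect x y v u w t) (hempty : ∀ g, ¬ (StrictSW x y v g ∧ StrictSW x y g t)) :
    ∃ b, (y v < y b ∧ y b < y u) ∧ (x b < x v ∨ x w < x b) := by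
  obtain ⟨b, hb⟩ := (ne_univ_iff_exists_notMem _).1
    (huniv w t fun e => R.right.2.1.ne (congrArg y e))
  rw [mem_line_iff_of_vertical R.right.1.symm R.right.2.1] at hb
  refine ⟨b, ?_, ?_⟩ <;> grind [R.left.2.2 b, hempty b, R.coords]

theorem isFresh_or_of_interior_empty [Finite P] (huniv : ∀ u v, u ≠ v → line x y u v ≠ univ)
    (R : IsRect x y v u w t) (hempty : ∀ g, ¬ (StrictSW x y v g ∧ StrictSW x y g t)) :
    IsFresh x y w t (line x y v t) ∨ IsFresh x y w t (line x y u w) := by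
  obtain ⟨a, hax, hay⟩ := R.exists_above_or_below huniv hempty
  obtain ⟨b, hby, hbx⟩ := R.exists_left_or_right huniv hempty
  have hR := R.coords
  have inc : a ∉ line x y v t ∧ b ∉ line x y v t := by
    simp only [R.strictSW.mem_line_iff]
    grind
  have dec : a ∉ line x (toDual ∘ y) u w ∧ b ∉ line x (toDual ∘ y) u w := by
    simp only [R.strictSW_toDual.mem_line_iff]
    grind
  -- Take the diagonal that has `a` and `b` on the same side.
  rcases hay with hay | hay <;> rcases hbx with hbx | hbx
  · right
    simpa using (R.dual.isFresh_of_notMem dec.2 (by grind) dec.1 (by grind)).of_toDual R.right.1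
  · left
    exact R.isFresh_of_notMem inc.1 (by grind) inc.2 (by grind)
  · left
    exact R.isFresh_of_notMem inc.2 (by grind) inc.1 (by grind)
  · right
    simpa using (R.dual.isFresh_of_notMem dec.1 (by grind) dec.2 (by grind)).of_toDual R.right.1

theorem isFresh_of_below (R : IsRect x y v u w t) (Q : IsRect x y v₁ u₁ w₁ t₁)
    (hv : x v₁ = x v) (hw : x w₁ = x w) (hlt : y v₁ < y v) (hQ : IsLeftmostSide x y v₁ u₁) :
    IsFresh x y w t (line x y v t) := by
  have hR := R.coords
  have hQc := Q.coords
  have hw₁ : w₁ ∉ line x y v t := by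
    rw [R.strictSW.mem_line_iff]
    grind
  have hv₁ : v₁ ∈ line x y v t := by
    rw [R.strictSW.mem_line_iff]
    grind
  refine R.isFresh_diagonal hw₁ (by grind) (fun p q he hpq hl hs => ?_)
    fun v' u' w' t' R' hl hs => ?_
  · have hqw₁ : ¬ SW x y q w₁ := fun h => hw₁ (hl ▸ (he.mem_line_iff hpq).2 (.inr h))
    have hqv₁ : ¬ SW x y v₁ p := by grind
    grind [(he.mem_line_iff hpq).1 (hl ▸ hv₁)]
  · have hR' := R'.coords
    have htw₁ : ¬ SW x y t' w₁ := fun h =>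
      hw₁ (hl ▸ R'.strictSW.mem_line_iff.2 (.inr (.inr h)))
    have hbox : SW x y v' v₁ ∧ SW x y v₁ t' := by
      grind [R'.strictSW.mem_line_iff.1 (hl ▸ hv₁)]
    -- The right side of `R'` is then the segment `v₁u₁`, against the choice of `Q`.
    have hcol : x v₁ = x w' := by grind
    have hbot : y v₁ = y w' := by grind [R'.right.2.2 v₁ hcol]
    have htop : y t' = y u₁ := by
      grind [R'.right.2.2 u₁ (by grind), Q.left.2.2 t' (by grind)]
    grind [hQ v' u' R'.left (by grind) (by grind)]

theorem bottom_line_ne_of_oblique (R : IsRect x y v u w t)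
    (hg : StrictSW x y v g ∧ StrictSW x y g t) (hx : x a ≠ x b) (hy : y a ≠ y b) :
    line x y v w ≠ line x y a b := by
  wlog hlt : x a < x b generalizing a b
  · rw [line_comm a b]
    exact this hx.symm hy.symm (hx.lt_or_gt.resolve_left hlt)
  have hR := R.coords
  intro hl
  have mem (c : P) (hc : x c ≤ x v ∨ x w ≤ x c) : c ∈ line x y a b := by
    rw [← hl, mem_line_iff_of_horizontal R.lt R.bot]
    tauto
  have hg' : g ∉ line x y a b := by
    rw [← hl, mem_line_iff_of_horizontal R.lt R.bot]
    grind
  -- All corners are on the line of `ab`; those opposite to its slope put `g` on it as well.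
  rcases hy.lt_or_gt with hy | hy
  · have hab : StrictSW x y a b := ⟨hlt, hy⟩
    have := hab.opposite_mem_line R.strictSW_toDual (mem u (by grind)) (mem w (by grind))
    rw [hab.mem_line_iff] at hg'
    grind
  · have hab : StrictSW x (toDual ∘ y) a b := ⟨hlt, hy⟩
    rw [← line_toDual] at mem hg'
    have := hab.opposite_mem_line (strictSW_toDual_toDual.2 R.strictSW) (mem v (by grind))
      (mem t (by grind))
    rw [hab.mem_line_iff] at hg'
    grind

theorem bottom_line_ne_diagonal (R : IsRect x y v u w t)
    (hg : StrictSW x y v g ∧ StrictSW x y g t) (R' : IsRect x y v' u' w' t') :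
    line x y v w ≠ line x y v' t' ∧ line x y v w ≠ line x y u' w' := by
  have := R'.coords
  exact ⟨R.bottom_line_ne_of_oblique hg (by grind) (by grind),
    R.bottom_line_ne_of_oblique hg (by grind) (by grind)⟩

theorem columns_le_of_bottom_line_eq (R : IsRect x y v u w t) (R' : IsRect x y v' u' w' t')
    (hg : StrictSW x y v g ∧ StrictSW x y g t) (hl : line x y v w = line x y v' w') :
    x v' ≤ x v ∧ x w ≤ x w' := by
  have mem_iff (c : P) : (x c ≤ x v ∨ x w ≤ x c ∨ y c = y v) ↔
      (x c ≤ x v' ∨ x w' ≤ x c ∨ y c = y v') := by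
    rw [← mem_line_iff_of_horizontal R.lt R.bot, hl, mem_line_iff_of_horizontal R'.lt R'.bot]
  have hR := R.coords
  have hR' := R'.coords
  have hgx : x v' < x g ∧ x g < x w' := by grind
  -- A column of `R'` strictly between those of `R` would have two points at the height of `v`.
  constructor
  · by_contra! hlt
    grind [mem_iff v', mem_iff u']
  · by_contra! hlt
    grind [mem_iff w', mem_iff t']

end IsRect

theorem IsDetour.line_ne_decreasing_diagonal (h : IsDetour x y p q p' q' z)
    (R : IsRect x y v u w t) : line x y z q ≠ line x y u w := by
  intro hl
  have mem_iff (c : P) : c ∈ line x y z q ↔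
      SW x (toDual ∘ y) c u ∨ (SW x (toDual ∘ y) u c ∧ SW x (toDual ∘ y) c w) ∨
        SW x (toDual ∘ y) w c := by
    rw [hl, ← R.strictSW_toDual.mem_line_iff, line_toDual]
  have hR := R.coords
  have hp := (mem_iff p).not.1 h.left_notMem_line
  have hq' := (mem_iff q').not.1 h.right_notMem_line
  have hv : ¬ StrictSW x y v q := fun hv => h.notMem_line (.inl hv)
    ((mem_iff v).2 (by grind))
  have ht : ¬ StrictSW x y q t := fun ht => h.notMem_line (.inr ht)
    ((mem_iff t).2 (by grind))
  have hq : SW x (toDual ∘ y) q u ∨ SW x (toDual ∘ y) w q := by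
    grind [(mem_iff q).1 (right_mem_line z q)]
  rcases hq with hq | hq
  · have hle : x q' ≤ x v := by grind [h.mem_regions v, h.increasing, h.increasing_right, h.sw]
    grind [h.increasing_right, h.sw]
  · have hle : x t ≤ x p := by
      by_contra! hlt
      have hqx : x q < x q' := h.sw.1.trans_lt h.increasing_right.1
      obtain ⟨hcol, hhigh⟩ : x w = x q ∧ y t ≤ y p' := by
        grind [h.mem_regions t, h.increasing, h.increasing_right]
      have hvp : x v ≤ x p := (h.left.adj.2 v).resolve_right (by grind)
      have hlow : y p' < y v := by grind [h.mem_regions v, h.increasing]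
      grind
    grind [h.increasing, h.sw]

theorem IsDetour.line_ne_diagonal (h : IsDetour x y p q p' q' z) (R : IsRect x y v u w t) :
    line x y z q ≠ line x y v t ∧ line x y z q ≠ line x y u w :=
  ⟨h.line_ne_of_strictSW R.strictSW, h.line_ne_decreasing_diagonal R⟩

/-! ### Charging edges and repeated segments to lines -/

section Charges

variable {e e' : P × P} {E : Finset (P × P)}

/-- A family of edges, given as pairs of points from left to right, of which no two start in the
same column. -/
structure IsEdgeFamily (x : P → α) (y : P → β) (E : Finset (P × P)) : Prop where
  isEdge : ∀ e ∈ E, IsEdge x y e.1 e.2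
  injOn : InjOn (fun e : P × P => x e.1) E

theorem IsEdgeFamily.dual (hE : IsEdgeFamily x y E) : IsEdgeFamily x (toDual ∘ y) E :=
  ⟨fun e he => (hE.isEdge e he).dual, hE.injOn⟩

theorem exists_isEdgeFamily [Fintype P] [Nonempty P]
    (inj : Function.Injective fun p => (x p, y p)) (huniv : ∀ u v, u ≠ v → line x y u v ≠ univ) :
    ∃ E, IsEdgeFamily x y E ∧ (Finset.univ.image x).card ≤ E.card + 1 := by
  obtain ⟨m, hm⟩ := Finite.exists_max x
  set C := (Finset.univ.image x).erase (x m)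
  have hex : ∀ c ∈ C, ∃ e : P × P, IsEdge x y e.1 e.2 ∧ x e.1 = c := by
    intro c hc
    obtain ⟨hne, a, rfl⟩ : c ≠ x m ∧ ∃ a, x a = c := by simpa [C] using hc
    obtain ⟨p, q, h, hp⟩ := exists_isEdge inj huniv ((hm a).lt_of_ne hne)
    exact ⟨(p, q), h, hp⟩
  choose! f hf hfx using hex
  refine ⟨C.image f, ⟨by simpa using hf, ?_⟩, ?_⟩
  · rw [Finset.coe_image]
    rintro _ ⟨c, hc, rfl⟩ _ ⟨c', hc', rfl⟩ hcc
    simp only [hfx c hc, hfx c' hc'] at hcc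
    rw [hcc]
  · rw [Finset.card_image_of_injOn (s := C) fun c hc c' hc' h => by
      rw [← hfx c hc, ← hfx c' hc', h]]
    exact tsub_le_iff_right.1 Finset.pred_card_le_card_erase

theorem IsEdgeFamily.eq_of_column_eq (hE : IsEdgeFamily x y E) (he : e ∈ E) (he' : e' ∈ E)
    (hx : x e.2 = x e'.2) : e = e' := by
  have h := (hE.isEdge e he).adj
  have h' := (hE.isEdge e' he').adj
  refine hE.injOn he he' (?_ : x e.1 = x e'.1)
  have := h.2 e'.1
  have := h'.2 e.1
  grind [h'.1, h.1]

/-- The lines charged to the edge `e` of the family `E`: its own line if no later edge of `E` has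
the same line, and otherwise the line of a detour along `e` or the mirror image of one. -/
def EdgeCharge (x : P → α) (y : P → β) (E : Finset (P × P)) (e : P × P) (ℓ : Set P) : Prop :=
  (ℓ = line x y e.1 e.2 ∧ ∀ e' ∈ E, ℓ = line x y e'.1 e'.2 → x e'.1 ≤ x e.1) ∨
    ∃ e' ∈ E, ∃ z, ℓ = line x y z e.2 ∧
      (IsDetour x y e.1 e.2 e'.1 e'.2 z ∨ IsDetour x (toDual ∘ y) e.1 e.2 e'.1 e'.2 z)

theorem IsEdgeFamily.exists_edgeCharge [Finite P] (huniv : ∀ u v, u ≠ v → line x y u v ≠ univ)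
    (hE : IsEdgeFamily x y E) (he : e ∈ E) : ∃ ℓ, EdgeCharge x y E e ℓ := by
  have h := hE.isEdge e he
  by_cases hlast : ∀ e' ∈ E, line x y e.1 e.2 = line x y e'.1 e'.2 → x e'.1 ≤ x e.1
  · exact ⟨_, .inl ⟨rfl, hlast⟩⟩
  push Not at hlast
  obtain ⟨e', he', hl, hlt⟩ := hlast
  have h' := hE.isEdge e' he'
  rcases h.strictSW_or with hs | hs
  · obtain ⟨z, hz⟩ := h.exists_isDetour huniv h' hs hl hlt
    exact ⟨_, .inr ⟨e', he', z, rfl, .inl hz⟩⟩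
  · obtain ⟨z, hz⟩ :=
      h.dual.exists_isDetour (by simpa using huniv) h'.dual hs (by simpa using hl) hlt
    exact ⟨_, .inr ⟨e', he', z, rfl, .inr hz⟩⟩

theorem EdgeCharge.exists_oblique_eq_line (hE : IsEdgeFamily x y E) (he : e ∈ E)
    (h : EdgeCharge x y E e ℓ) : ∃ a b, x a ≠ x b ∧ y a ≠ y b ∧ ℓ = line x y a b := by
  rcases h with ⟨rfl, -⟩ | ⟨e', -, z, rfl, hd | hd⟩
  · exact ⟨e.1, e.2, (hE.isEdge e he).adj.1.ne, (hE.isEdge e he).y_ne, rfl⟩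
  · exact ⟨z, e.2, by grind [hd.strictSW_or], by grind [hd.strictSW_or], rfl⟩
  · refine ⟨z, e.2, ?_, ?_, rfl⟩ <;> rcases hd.strictSW_or with hz | hz <;>
      simp only [strictSW_toDual_toDual] at hz <;> grind

theorem IsDetour.line_ne_family (hE : IsEdgeFamily x y E) {e₁ : P × P} (he : e ∈ E) (he' : e' ∈ E)
    (he₁ : e₁ ∈ E) (h : IsDetour x y e.1 e.2 e'.1 e'.2 z) :
    line x y z e.2 ≠ line x y e₁.1 e₁.2 :=
  h.line_ne_edge_line (hE.isEdge e₁ he₁) (fun hx => hE.injOn he₁ he hx ▸ h.increasing)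
    fun hx => hE.injOn he₁ he' hx ▸ h.increasing_right

theorem EdgeCharge.left_unique (hE : IsEdgeFamily x y E) (he : e ∈ E) (he' : e' ∈ E)
    (h : EdgeCharge x y E e ℓ) (h' : EdgeCharge x y E e' ℓ) : e = e' := by
  rcases h with ⟨rfl, hlast⟩ | ⟨f, hf, z, rfl, hd⟩ <;>
    rcases h' with ⟨hl, hlast'⟩ | ⟨f', hf', z', hl, hd'⟩
  · exact hE.injOn he he' ((hlast' e he rfl).antisymm (hlast e' he' hl))
  · rcases hd' with hd' | hd'
    · exact absurd hl.symm (hd'.line_ne_family hE he' hf' he)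
    · exact absurd hl.symm (by simpa using hd'.line_ne_family hE.dual he' hf' he)
  · rcases hd with hd | hd
    · exact absurd hl (hd.line_ne_family hE he hf he')
    · exact absurd hl (by simpa using hd.line_ne_family hE.dual he hf he')
  · rcases hd with hd | hd <;> rcases hd' with hd' | hd'
    · exact hE.eq_of_column_eq he he' (hd.column_eq_of_line_eq hd' hl)
    · exact absurd hl (hd.line_ne_of_isDetour_toDual hd')
    · exact absurd hl.symm (hd'.line_ne_of_isDetour_toDual hd)
    · exact hE.eq_of_column_eq he he' (hd.column_eq_of_line_eq hd' (by simpa using hl))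

/-- The lines charged to a segment with bottom end `w` that repeats a leftmost segment `vu`. If the
rectangle has an interior point and is the lowest such rectangle between its two columns, this is
the line of its bottom side; otherwise it is a diagonal that is fresh for `w` and the top end. -/
def RectCharge (x : P → α) (y : P → β) (w : P) (ℓ : Set P) : Prop :=
  ∃ v u t, IsRect x y v u w t ∧ IsLeftmostSide x y v u ∧
    ((ℓ = line x y v w ∧ (∃ g, StrictSW x y v g ∧ StrictSW x y g t) ∧
        ∀ v₁ u₁ w₁ t₁, IsRect x y v₁ u₁ w₁ t₁ → IsLeftmostSide x y v₁ u₁ →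
          x v₁ = x v → x w₁ = x w → y v ≤ y v₁) ∨
      ((ℓ = line x y v t ∨ ℓ = line x y u w) ∧ IsFresh x y w t ℓ))

theorem IsRect.exists_rectCharge [Finite P] (huniv : ∀ u v, u ≠ v → line x y u v ≠ univ)
    (R : IsRect x y v u w t) (hF : IsLeftmostSide x y v u) : ∃ ℓ, RectCharge x y w ℓ := by
  by_cases hlow : ∀ v₁ u₁ w₁ t₁, IsRect x y v₁ u₁ w₁ t₁ → IsLeftmostSide x y v₁ u₁ →
      x v₁ = x v → x w₁ = x w → y v ≤ y v₁
  · by_cases hint : ∃ g, StrictSW x y v g ∧ StrictSW x y g t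
    · exact ⟨_, v, u, t, R, hF, .inl ⟨rfl, hint, hlow⟩⟩
    · rcases R.isFresh_or_of_interior_empty huniv (not_exists.1 hint) with h | h
      · exact ⟨_, v, u, t, R, hF, .inr ⟨.inl rfl, h⟩⟩
      · exact ⟨_, v, u, t, R, hF, .inr ⟨.inr rfl, h⟩⟩
  · push Not at hlow
    obtain ⟨v₁, u₁, w₁, t₁, Q, hQ, hv, hw, hlt⟩ := hlow
    exact ⟨_, v, u, t, R, hF, .inr ⟨.inl rfl, R.isFresh_of_below Q hv hw hlt hQ⟩⟩

theorem RectCharge.exists_eq_line (h : RectCharge x y w ℓ) : ∃ a b, a ≠ b ∧ ℓ = line x y a b := by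
  obtain ⟨v, u, t, R, -, ⟨rfl, -⟩ | ⟨rfl | rfl, -⟩⟩ := h
  · exact ⟨v, w, by grind [R.coords], rfl⟩
  · exact ⟨v, t, by grind [R.coords], rfl⟩
  · exact ⟨u, w, by grind [R.coords], rfl⟩

theorem RectCharge.left_unique (inj : Function.Injective fun p => (x p, y p))
    (h : RectCharge x y w ℓ) (h' : RectCharge x y w' ℓ) : w = w' := by
  obtain ⟨v, u, t, R, hF, hR⟩ := h
  obtain ⟨v', u', t', R', hF', hR'⟩ := h'
  suffices hxy : x w = x w' ∧ y w = y w' from inj (Prod.ext hxy.1 hxy.2)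
  rcases hR with ⟨rfl, ⟨g, hg⟩, hlow⟩ | ⟨hdiag, hfresh⟩ <;>
    rcases hR' with ⟨hl, ⟨g', hg'⟩, hlow'⟩ | ⟨hdiag', -⟩
  · have hle := R.columns_le_of_bottom_line_eq R' hg hl
    have hge := R'.columns_le_of_bottom_line_eq R hg' hl.symm
    have hv : x v = x v' := hge.1.antisymm hle.1
    have hw : x w = x w' := hle.2.antisymm hge.2
    have := hlow v' u' w' t' R' hF' hv.symm hw.symm
    have := hlow' v u w t R hF hv hw
    grind [R.bot, R'.bot]
  · exact absurd hdiag' (not_or.2 (R.bottom_line_ne_diagonal hg R'))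
  · exact absurd hdiag (hl ▸ not_or.2 (R'.bottom_line_ne_diagonal hg' R))
  · by_contra hne
    have := hfresh.ne_diagonal v' u' w' t' R' (by grind)
    tauto

theorem EdgeCharge.not_rectCharge (hE : IsEdgeFamily x y E) (he : e ∈ E)
    (h : EdgeCharge x y E e ℓ) : ¬ RectCharge x y w ℓ := by
  rintro ⟨v, u, t, R, -, ⟨hl, ⟨g, hg⟩, -⟩ | ⟨hdiag, hfresh⟩⟩
  · obtain ⟨a, b, hx, hy, hl'⟩ := h.exists_oblique_eq_line hE he
    exact R.bottom_line_ne_of_oblique hg hx hy (hl.symm.trans hl')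
  · rcases h with ⟨hl, -⟩ | ⟨e', -, z, rfl, hd | hd⟩
    · exact hfresh.ne_edge e.1 e.2 (hE.isEdge e he) hl
    · exact not_or.2 (hd.line_ne_diagonal R) hdiag
    · exact not_or.2 (hd.line_ne_diagonal R.dual) (by simpa using hdiag.symm)

end Charges

/-! ### Counting -/

section Counting

variable [Fintype P]

/-- The lines induced by pairs of distinct points. -/
def lines (x : P → α) (y : P → β) : Finset (Set P) :=
  Finset.univ.offDiag.image fun e : P × P => line x y e.1 e.2

theorem mem_lines : ℓ ∈ lines x y ↔ ∃ a b, a ≠ b ∧ ℓ = line x y a b := by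
  simp [lines, eq_comm]

/-- The bottom ends of the repeated segments: a segment at the same two heights lies in a column
further left, and the leftmost such segment is the left side of the rectangle in the definition. -/
def repeatedSides (x : P → α) (y : P → β) : Finset P :=
  {w | ∃ v u t, IsRect x y v u w t ∧ IsLeftmostSide x y v u}

/-- The bottom ends of the segments that have no segment at the same two heights further left. -/
def firstSides (x : P → α) (y : P → β) : Finset P :=
  {w | ∃ u, ColCovBy x y w u ∧ IsLeftmostSide x y w u}

theorem ColCovBy.mem_firstSides_or_mem_repeatedSides (h : ColCovBy x y w t) :
    w ∈ firstSides x y ∨ w ∈ repeatedSides x y := by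
  obtain ⟨v, u, hvu, hv, hu, hmin, hle⟩ := exists_isLeftmostSide h
  simp only [firstSides, repeatedSides, Finset.mem_filter, Finset.mem_univ, true_and]
  rcases hle.lt_or_eq with hlt | heq
  · exact .inr ⟨v, u, t, ⟨hvu, h, hlt, hv, hu⟩, hmin⟩
  · refine .inl ⟨t, h, fun v' u' h' hv' hu' => ?_⟩
    exact heq ▸ hmin v' u' h' (hv'.trans hv.symm) (hu'.trans hu.symm)

theorem card_le_card_sides_add_card_columns (inj : Function.Injective fun p => (x p, y p)) :
    Fintype.card P ≤ (firstSides x y).card + (repeatedSides x y).card +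
      (Finset.univ.image x).card := by
  set B := firstSides x y ∪ repeatedSides x y
  have hB : B.card ≤ (firstSides x y).card + (repeatedSides x y).card := Finset.card_union_le ..
  have hBc : Bᶜ.card ≤ (Finset.univ.image x).card := by
    refine Finset.card_le_card_of_injOn x (fun a _ => by simp) fun a ha b hb hx => ?_
    have top {a b : P} (ha : a ∈ Bᶜ) (hx : x b = x a) : y b ≤ y a := by
      by_contra! hlt
      obtain ⟨u, hu⟩ := exists_colCovBy hx hlt
      have := hu.mem_firstSides_or_mem_repeatedSides
      simp only [B, Finset.mem_compl, Finset.mem_union] at ha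
      exact ha this
    exact inj (Prod.ext hx ((top hb hx).antisymm (top ha hx.symm)))
  have := Finset.card_add_card_compl B
  omega

theorem card_firstSides_lt_card_lines [Nontrivial P]
    (inj : Function.Injective fun p => (x p, y p)) (huniv : ∀ u v, u ≠ v → line x y u v ≠ univ) :
    (firstSides x y).card < (lines x y).card := by
  obtain ⟨m, hm⟩ := Finite.exists_min y
  have hle : (firstSides x y).card ≤ ((lines x y).filter (m ∈ ·)).card := by
    refine Finset.card_le_card_of_forall_subsingleton
      (fun w ℓ => ∃ u, ColCovBy x y w u ∧ IsLeftmostSide x y w u ∧ ℓ = line x y w u) ?_ ?_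
    · intro w hw
      obtain ⟨u, hu, hF⟩ := (Finset.mem_filter.1 hw).2
      refine ⟨line x y w u, Finset.mem_filter.2 ⟨mem_lines.2 ⟨w, u, ?_, rfl⟩, ?_⟩, u, hu, hF, rfl⟩
      · exact fun e => hu.2.1.ne (congrArg y e)
      · exact (mem_line_iff_of_vertical hu.1.symm hu.2.1).2 (.inl (hm w))
    · rintro _ - w ⟨-, u, hu, hF, rfl⟩ w' ⟨-, u', hu', hF', hl⟩
      obtain ⟨hw, ht⟩ := hu.y_eq_of_line_eq huniv hu' hl
      exact inj (Prod.ext ((hF w' u' hu' hw.symm ht.symm).antisymm (hF' w u hu hw ht)) hw)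
  refine hle.trans_lt (Finset.card_lt_card (Finset.filter_ssubset.2 ?_))
  obtain ⟨t, ht⟩ := exists_ne m
  obtain ⟨w, hw⟩ := (ne_univ_iff_exists_notMem _).1 (huniv t m ht)
  refine ⟨line x y t w, mem_lines.2 ⟨t, w, ?_, rfl⟩, ?_⟩
  · rintro rfl
    exact hw (left_mem_line ..)
  · rwa [← mem_line_rotate]

theorem IsEdgeFamily.card_add_card_repeatedSides_le {E : Finset (P × P)}
    (inj : Function.Injective fun p => (x p, y p)) (huniv : ∀ u v, u ≠ v → line x y u v ≠ univ)
    (hE : IsEdgeFamily x y E) : E.card + (repeatedSides x y).card ≤ (lines x y).card := by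
  rw [← Finset.card_disjSum]
  refine Finset.card_le_card_of_forall_subsingleton
    (Sum.elim (EdgeCharge x y E) (RectCharge x y)) ?_ ?_
  · rintro (e | w) ha
    · have he : e ∈ E := by simpa using ha
      obtain ⟨ℓ, hℓ⟩ := hE.exists_edgeCharge huniv he
      obtain ⟨a, b, hx, -, hab⟩ := hℓ.exists_oblique_eq_line hE he
      exact ⟨ℓ, mem_lines.2 ⟨a, b, fun h => hx (congrArg x h), hab⟩, hℓ⟩
    · obtain ⟨v, u, t, R, hF⟩ : ∃ v u t, IsRect x y v u w t ∧ IsLeftmostSide x y v u := by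
        simpa [repeatedSides] using ha
      obtain ⟨ℓ, hℓ⟩ := R.exists_rectCharge huniv hF
      exact ⟨ℓ, mem_lines.2 hℓ.exists_eq_line, hℓ⟩
  · rintro ℓ - (e | w) ⟨ha, h⟩ (e' | w') ⟨ha', h'⟩
    · exact congrArg Sum.inl
        (EdgeCharge.left_unique hE (by simpa using ha) (by simpa using ha') h h')
    · exact absurd h' (EdgeCharge.not_rectCharge hE (by simpa using ha) h)
    · exact absurd h (EdgeCharge.not_rectCharge hE (by simpa using ha') h')
    · exact congrArg Sum.inr (RectCharge.left_unique inj h h')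

end Counting

/-! ### The plane with the `L∞` metric -/

section Metric

/-- The first coordinate after rotating by `45°` (and scaling by `√2`). -/
def sumCoord (p : ℝ × ℝ) : ℝ := p.1 + p.2

/-- The second coordinate after rotating by `45°` (and scaling by `√2`), up to sign. -/
def diffCoord (p : ℝ × ℝ) : ℝ := p.1 - p.2

theorem two_mul_max_abs_abs {R : Type*} [CommRing R] [LinearOrder R] [IsStrictOrderedRing R]
    (a b : R) : 2 * max |a| |b| = |a + b| + |a - b| := by
  grind

theorem two_mul_rhoInf (u v : ℝ × ℝ) :
    2 * rhoInf u v = dist (sumCoord u) (sumCoord v) + dist (diffCoord u) (diffCoord v) := by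
  rw [rhoInf, two_mul_max_abs_abs, Real.dist_eq, Real.dist_eq, sumCoord, sumCoord, diffCoord,
    diffCoord]
  ring_nf

theorem dist_add_dist_eq_iff_mem_uIcc {a b c : ℝ} :
    dist a b + dist b c = dist a c ↔ b ∈ uIcc a c := by
  rw [dist_add_dist_eq_iff, ← mem_segment_iff_wbtw, segment_eq_uIcc]

theorem rhoInf_eq_add_iff {u z v : ℝ × ℝ} :
    rhoInf u v = rhoInf u z + rhoInf z v ↔ z ∈ box sumCoord diffCoord u v := by
  have huv := two_mul_rhoInf u v
  have huz := two_mul_rhoInf u z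
  have hzv := two_mul_rhoInf z v
  have hs := dist_triangle (sumCoord u) (sumCoord z) (sumCoord v)
  have hd := dist_triangle (diffCoord u) (diffCoord z) (diffCoord v)
  rw [box, mem_ofPred_eq, ← dist_add_dist_eq_iff_mem_uIcc, ← dist_add_dist_eq_iff_mem_uIcc]
  constructor
  · intro h
    constructor <;> linarith
  · rintro ⟨h, h'⟩
    linarith

theorem mem_lineThrough_iff {X : Finset (ℝ × ℝ)} {u v z : ℝ × ℝ} (huv : u ≠ v) :
    z ∈ lineThrough X u v ↔ z ∈ X ∧ z ∈ line sumCoord diffCoord u v := by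
  rw [lineThrough, Finset.mem_filter]
  refine and_congr_right fun _ => ?_
  rcases eq_or_ne z u with rfl | hzu
  · simp [left_mem_line]
  rcases eq_or_ne z v with rfl | hzv
  · simp [right_mem_line]
  simp only [MBtw, rhoInf_eq_add_iff, mem_line, hzu, hzv, hzu.symm, hzv.symm, huv, ne_eq,
    not_false_eq_true, true_and, false_or]

theorem injective_coords : Function.Injective fun p => (sumCoord p, diffCoord p) := by
  intro p q h
  obtain ⟨hs, hd⟩ : p.1 + p.2 = q.1 + q.2 ∧ p.1 - p.2 = q.1 - q.2 := Prod.ext_iff.1 h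
  exact Prod.ext (by linarith) (by linarith)

theorem preimage_lineThrough {X : Finset (ℝ × ℝ)} {u v : X} (huv : u ≠ v) :
    (Subtype.val ⁻¹' (lineThrough X u v : Set (ℝ × ℝ)) : Set X) =
      line (fun p : X => sumCoord p) (fun p => diffCoord p) u v := by
  ext z
  simp only [mem_preimage, SetLike.mem_coe,
    mem_lineThrough_iff (Subtype.coe_ne_coe.2 huv), z.2, true_and]
  rfl

theorem card_lines_le_numLines (X : Finset (ℝ × ℝ)) :
    (lines (fun p : X => sumCoord p) fun p : X => diffCoord p).card ≤ numLines X := by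
  rw [numLines]
  refine (Finset.card_le_card fun ℓ hℓ => ?_).trans
    (Finset.card_image_le
      (f := fun L : Finset (ℝ × ℝ) => (Subtype.val ⁻¹' (L : Set (ℝ × ℝ)) : Set X)))
  obtain ⟨u, v, huv, rfl⟩ := mem_lines.1 hℓ
  refine Finset.mem_image.2 ⟨_, Finset.mem_image.2 ⟨(u, v), ?_, rfl⟩, preimage_lineThrough huv⟩
  simpa using huv

theorem line_ne_univ {X : Finset (ℝ × ℝ)}
    (huniv : ∀ u ∈ X, ∀ v ∈ X, u ≠ v → lineThrough X u v ≠ X) (u v : X) (huv : u ≠ v) :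
    line (fun p : X => sumCoord p) (fun p => diffCoord p) u v ≠ univ := by
  rw [← preimage_lineThrough huv]
  intro h
  refine huniv u u.2 v v.2 (Subtype.coe_ne_coe.2 huv) ((Finset.filter_subset _ _).antisymm ?_)
  exact fun z hz => eq_univ_iff_forall.1 h ⟨z, hz⟩

end Metric

end LinfLines

theorem Linf_many_lines_general {P α β : Type*} [LinearOrder α] [LinearOrder β] [Fintype P]
    [Nontrivial P] {x : P → α} {y : P → β} (inj : Function.Injective fun p => (x p, y p))
    (huniv : ∀ u v, u ≠ v → LinfLines.line x y u v ≠ Set.univ) :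
    Fintype.card P ≤ 2 * (LinfLines.lines x y).card := by
  obtain ⟨E, hE, hcols⟩ := LinfLines.exists_isEdgeFamily inj huniv
  have hpoints := LinfLines.card_le_card_sides_add_card_columns inj
  have hfirst := LinfLines.card_firstSides_lt_card_lines inj huniv
  have hrest := hE.card_add_card_repeatedSides_le inj huniv
  omega

/-- A non-collinear set of `n ≥ 2` points in the plane with the L∞ metric
induces at least `⌈n/2⌉` lines. -/
theorem Linf_many_lines (X : Finset (ℝ × ℝ)) (n : ℕ) (hn : X.card = n) (h2 : 2 ≤ n)
    (huniv : ∀ u ∈ X, ∀ v ∈ X, u ≠ v → lineThrough X u v ≠ X) :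
    (n + 1) / 2 ≤ numLines X := by
  have : Nontrivial X := Fintype.one_lt_card_iff_nontrivial.1 (by rwa [Fintype.card_coe, hn])
  have hcard := Linf_many_lines_general
    (LinfLines.injective_coords.comp Subtype.val_injective) (LinfLines.line_ne_univ huniv)
  have hlines := LinfLines.card_lines_le_numLines X
  rw [Fintype.card_coe] at hcard
  omega
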